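/- Let J_1, …, J_n be pairwise disjoint Jordan curves in ℝ². Then the complement ℝ² \ ⋃_{i=1}^n closure(int J_i) is path-connected. -/

import Mathlib

open Set

/-- A Jordan curve in the plane: the image of an injective continuous map from the
circle `S¹` into `ℝ²`. -/
def IsJordanCurve (J : Set (EuclideanSpace ℝ (Fin 2))) : Prop :=
  ∃ f : Metric.sphere (0 : EuclideanSpace ℝ (Fin 2)) 1 → EuclideanSpace ℝ (Fin 2),
    Continuous f ∧ Function.Injective f ∧ Set.range f = J

/-- The interior of a Jordan curve: the union of the bounded connected components of the
complement of `J`. -/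
def jordanInterior (J : Set (EuclideanSpace ℝ (Fin 2))) : Set (EuclideanSpace ℝ (Fin 2)) :=
  {x | x ∉ J ∧ Bornology.IsBounded (connectedComponentIn Jᶜ x)}

/-!
Write `ext J` for the union of the unbounded components of the complement of `J`, and fill each
curve to the compact set `(ext J)ᶜ`. Two disjoint continua in the plane have disjoint or nested
fillings, so the closures of the interiors form a laminar family: any two are disjoint or nested.
A curve has empty interior as a set, so the complement of `closure (int J)` lies between the
connected set `ext J` and its closure, hence is connected.

It remains to see that complements of finite laminar unions of compact sets inherit connectedness.
By Eilenberg's criterion a compact `K ⊆ ℂ` has connected complement exactly when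
`(z - x) / (z - y)` has a continuous logarithm on `K` for all `x, y ∉ K`. Logarithms on disjoint
closed sets glue, and a laminar union is the disjoint union of its maximal members.
-/

open Topology Bornology

section Topology

variable {X : Type*} [TopologicalSpace X]

lemma frontier_connectedComponentIn_compl_subset [LocallyConnectedSpace X] {K : Set X}
    (hK : IsClosed K) (x : X) : frontier (connectedComponentIn Kᶜ x) ⊆ K := by
  intro z hz
  by_contra hzK
  rw [hK.isOpen_compl.connectedComponentIn.frontier_eq] at hz
  obtain ⟨y, hyz, hyx⟩ := mem_closure_iff.1 hz.1 _
    (hK.isOpen_compl.connectedComponentIn (x := z)) (mem_connectedComponentIn hzK)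
  apply hz.2
  rw [connectedComponentIn_eq hyx, ← connectedComponentIn_eq hyz]
  exact mem_connectedComponentIn hzK

lemma isPreconnected_union_connectedComponentIn_compl [LocallyConnectedSpace X]
    [PreconnectedSpace X] {K : Set X} (hK : IsClosed K) (hconn : IsConnected K) {x : X}
    (hx : x ∉ K) : IsPreconnected (K ∪ connectedComponentIn Kᶜ x) := by
  have hfr : (frontier (connectedComponentIn Kᶜ x)).Nonempty := by
    refine nonempty_frontier_iff.2 ⟨⟨x, mem_connectedComponentIn hx⟩, fun h => ?_⟩
    obtain ⟨q, hq⟩ := hconn.nonempty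
    exact connectedComponentIn_subset Kᶜ x (h ▸ mem_univ q) hq
  obtain ⟨q, hq⟩ := hfr
  have hqK : q ∈ K := frontier_connectedComponentIn_compl_subset hK x hq
  have hins : IsPreconnected (insert q (connectedComponentIn Kᶜ x)) :=
    isPreconnected_connectedComponentIn.subset_closure (subset_insert _ _)
      (insert_subset hq.1 subset_closure)
  have := hconn.isPreconnected.union q hqK (mem_insert _ _) hins
  rwa [union_insert, insert_eq_of_mem (mem_union_left _ hqK)] at this

lemma not_injOn_of_isPreconnected_diff_singleton {α : Type*} [LinearOrder α] [DenselyOrdered α]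
    [TopologicalSpace α] [OrderClosedTopology α] {S : Set X} (hnt : S.Nontrivial)
    (hS : IsPreconnected S) (hdiff : ∀ c ∈ S, IsPreconnected (S \ {c})) {φ : X → α}
    (hφ : ContinuousOn φ S) : ¬ InjOn φ S := by
  intro hinj
  obtain ⟨a, ha, b, hb, hab⟩ : ∃ a ∈ S, ∃ b ∈ S, φ a < φ b := by
    obtain ⟨a, ha, b, hb, hne⟩ := hnt
    rcases lt_or_gt_of_ne (hinj.ne ha hb hne) with h | h
    exacts [⟨a, ha, b, hb, h⟩, ⟨b, hb, a, ha, h⟩]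
  obtain ⟨t, hat, htb⟩ := exists_between hab
  obtain ⟨c, hc, rfl⟩ := hS.intermediate_value ha hb hφ ⟨hat.le, htb.le⟩
  obtain ⟨d, ⟨hd, hdc⟩, hφd⟩ := (hdiff c hc).intermediate_value
    ⟨ha, ne_of_apply_ne φ hat.ne⟩ ⟨hb, ne_of_apply_ne φ htb.ne'⟩ (hφ.mono sdiff_subset)
    ⟨hat.le, htb.le⟩
  exact hdc (hinj hd hc hφd)

end Topology

section Exterior

variable {X : Type*} [TopologicalSpace X] [Bornology X] {K S : Set X}

/-- The exterior of `K`: the union of the unbounded connected components of its complement. For a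
Jordan curve `J` it is the complement of `J ∪ jordanInterior J`. -/
def exterior (K : Set X) : Set X :=
  {x | x ∉ K ∧ ¬ IsBounded (connectedComponentIn Kᶜ x)}

lemma disjoint_exterior (K : Set X) : Disjoint K (exterior K) :=
  disjoint_left.2 fun _ hx hx' => hx'.1 hx

lemma subset_exterior_of_not_isBounded (hS : IsPreconnected S) (hSK : Disjoint S K)
    (hb : ¬ IsBounded S) : S ⊆ exterior K := fun _ hx =>
  ⟨disjoint_left.1 hSK hx, fun h =>
    hb (h.subset (hS.subset_connectedComponentIn hx hSK.subset_compl_right))⟩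

lemma subset_exterior_of_inter_nonempty (hS : IsPreconnected S) (hSK : Disjoint S K)
    (hne : (S ∩ exterior K).Nonempty) : S ⊆ exterior K := by
  obtain ⟨x, hxS, -, hx⟩ := hne
  have hsub : S ⊆ connectedComponentIn Kᶜ x :=
    hS.subset_connectedComponentIn hxS hSK.subset_compl_right
  exact fun y hy => ⟨disjoint_left.1 hSK hy, connectedComponentIn_eq (hsub hy) ▸ hx⟩

lemma connectedComponentIn_compl_subset_exterior {x : X} (hx : x ∈ exterior K) :
    connectedComponentIn Kᶜ x ⊆ exterior K :=
  subset_exterior_of_not_isBounded isPreconnected_connectedComponentIn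
    (disjoint_left.2 fun _ hy => connectedComponentIn_subset Kᶜ x hy) hx.2

lemma isOpen_exterior [LocallyConnectedSpace X] (hK : IsClosed K) : IsOpen (exterior K) :=
  isOpen_iff_mem_nhds.2 fun _ hx =>
    Filter.mem_of_superset
      (hK.isOpen_compl.connectedComponentIn.mem_nhds (mem_connectedComponentIn hx.1))
      (connectedComponentIn_compl_subset_exterior hx)

lemma isPreconnected_compl_exterior [LocallyConnectedSpace X] [PreconnectedSpace X]
    (hK : IsClosed K) (hconn : IsConnected K) : IsPreconnected (exterior K)ᶜ := by
  obtain ⟨q, hq⟩ := hconn.nonempty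
  have hKsub : K ⊆ (exterior K)ᶜ := (disjoint_exterior K).subset_compl_right
  refine isPreconnected_of_forall q fun z hz => ?_
  by_cases hzK : z ∈ K
  · exact ⟨K, hKsub, hq, hzK, hconn.isPreconnected⟩
  refine ⟨K ∪ connectedComponentIn Kᶜ z, union_subset hKsub fun y hy hyext => hz ?_, Or.inl hq,
    Or.inr (mem_connectedComponentIn hzK),
    isPreconnected_union_connectedComponentIn_compl hK hconn hzK⟩
  refine connectedComponentIn_compl_subset_exterior hyext ?_
  rw [← connectedComponentIn_eq hy]
  exact mem_connectedComponentIn hzK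

end Exterior

section NormedSpace

open Metric

variable {E : Type*} [NormedAddCommGroup E] [NormedSpace ℝ E] {K L : Set E}

lemma isPreconnected_compl_closedBall_zero (hE : 1 < Module.rank ℝ E) (R : ℝ) :
    IsPreconnected (closedBall (0 : E) R)ᶜ := by
  rcases lt_or_ge R 0 with hR | hR
  · simpa [closedBall_eq_empty.2 hR] using isPreconnected_univ
  convert (isPreconnected_Ioi (a := R)).prod (isPreconnected_sphere hE (0 : E) 1) |>.image
    (fun p => p.1 • p.2) (by fun_prop) using 1
  ext z
  simp only [mem_compl_iff, mem_closedBall_zero_iff, not_le, mem_image, mem_prod, mem_Ioi,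
    mem_sphere_zero_iff_norm, Prod.exists]
  constructor
  · intro hz
    have hz0 : ‖z‖ ≠ 0 := (hR.trans_lt hz).ne'
    exact ⟨‖z‖, ‖z‖⁻¹ • z, ⟨hz, by simp [norm_smul, hz0]⟩, smul_inv_smul₀ hz0 z⟩
  · rintro ⟨r, u, ⟨hr, hu⟩, rfl⟩
    rwa [norm_smul, hu, mul_one, Real.norm_of_nonneg (hR.trans hr.le)]

lemma isPreconnected_ball_diff_of_countable (hE : 1 < Module.rank ℝ E) (c : E) (r : ℝ)
    {s : Set E} (hs : s.Countable) : IsPreconnected (ball c r \ s) := by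
  rcases le_or_gt r 0 with hr | hr
  · simpa [ball_eq_empty.2 hr] using isPreconnected_empty
  let b := OpenPartialHomeomorph.univBall c r
  have hsource : b.source = univ := OpenPartialHomeomorph.univBall_source c r
  have hinj : Function.Injective b := injOn_univ.1 (hsource ▸ b.injOn)
  have himage : b '' (b ⁻¹' s)ᶜ = ball c r \ s := by
    rw [← preimage_compl, image_preimage_eq_inter_range, ← image_univ, ← hsource,
      b.image_source_eq_target, OpenPartialHomeomorph.univBall_target c hr, inter_comm, sdiff_eq]
  rw [← himage]
  exact ((hs.preimage hinj).isConnected_compl_of_one_lt_rank hE).isPreconnected.image b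
    (b.continuousOn.mono (hsource ▸ subset_univ _))

lemma isBounded_compl_exterior (hE : 1 < Module.rank ℝ E) (hK : IsBounded K) :
    IsBounded (exterior K)ᶜ := by
  obtain ⟨R, hR⟩ := hK.subset_closedBall 0
  have : Nontrivial E := rank_pos_iff_nontrivial.1 (zero_lt_one.trans hE)
  refine isBounded_closedBall.subset (compl_subset_comm.1
    (subset_exterior_of_not_isBounded (isPreconnected_compl_closedBall_zero hE R)
      (disjoint_compl_left_iff_subset.2 hR) fun h => ?_))
  exact NormedSpace.unbounded_univ ℝ E
    (union_compl_self (closedBall (0 : E) R) ▸ isBounded_closedBall.union h)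

lemma not_isBounded_exterior (hE : 1 < Module.rank ℝ E) (hK : IsBounded K) :
    ¬ IsBounded (exterior K) := by
  have : Nontrivial E := rank_pos_iff_nontrivial.1 (zero_lt_one.trans hE)
  intro h
  exact NormedSpace.unbounded_univ ℝ E
    (union_compl_self (exterior K) ▸ h.union (isBounded_compl_exterior hE hK))

lemma exterior_eq_connectedComponentIn (hE : 1 < Module.rank ℝ E) (hK : IsBounded K) {x : E}
    (hx : x ∈ exterior K) : exterior K = connectedComponentIn Kᶜ x := by
  refine Subset.antisymm (fun y hy => ?_) (connectedComponentIn_compl_subset_exterior hx)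
  obtain ⟨R, hR⟩ := hK.subset_closedBall 0
  have hmeets : ∀ z ∈ exterior K, ∃ w ∈ connectedComponentIn Kᶜ z, w ∈ (closedBall (0 : E) R)ᶜ :=
    fun z hz => not_subset.1 fun h => hz.2 (isBounded_closedBall.subset h)
  obtain ⟨v, hvx, hv⟩ := hmeets x hx
  obtain ⟨w, hwy, hw⟩ := hmeets y hy
  have hvw : w ∈ connectedComponentIn Kᶜ v :=
    (isPreconnected_compl_closedBall_zero hE R).subset_connectedComponentIn hv
      (compl_subset_compl.2 hR) hw
  rw [connectedComponentIn_eq hvx, connectedComponentIn_eq hvw, ← connectedComponentIn_eq hwy]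
  exact mem_connectedComponentIn hy.1

lemma isPreconnected_exterior (hE : 1 < Module.rank ℝ E) (hK : IsBounded K) :
    IsPreconnected (exterior K) := by
  obtain ⟨x, hx⟩ := nonempty_of_not_isBounded (not_isBounded_exterior hE hK)
  rw [exterior_eq_connectedComponentIn hE hK hx]
  exact isPreconnected_connectedComponentIn

lemma isPreconnected_union_exterior (hE : 1 < Module.rank ℝ E) (hK : IsCompact K)
    (hconn : IsConnected K) : IsPreconnected (K ∪ exterior K) := by
  obtain ⟨x, hx⟩ := nonempty_of_not_isBounded (not_isBounded_exterior hE hK.isBounded)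
  rw [exterior_eq_connectedComponentIn hE hK.isBounded hx]
  exact isPreconnected_union_connectedComponentIn_compl hK.isClosed hconn hx.1

lemma union_exterior_subset_exterior (hE : 1 < Module.rank ℝ E) (hK : IsCompact K)
    (hKconn : IsConnected K) (hLconn : IsPreconnected L) (hdisj : Disjoint K L)
    (hL : ¬ L ⊆ exterior K) : K ∪ exterior K ⊆ exterior L := by
  have hdisj_ext : Disjoint L (exterior K) := by
    rw [disjoint_iff_inter_eq_empty, ← not_nonempty_iff_eq_empty]
    exact fun h => hL (subset_exterior_of_inter_nonempty hLconn hdisj.symm h)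
  exact subset_exterior_of_not_isBounded (isPreconnected_union_exterior hE hK hKconn)
    (hdisj.union_left hdisj_ext.symm)
    fun h => not_isBounded_exterior hE hK.isBounded (h.subset subset_union_right)

lemma compl_exterior_disjoint_or_nested (hE : 1 < Module.rank ℝ E) (hK : IsCompact K)
    (hL : IsCompact L) (hKconn : IsConnected K) (hLconn : IsConnected L) (hdisj : Disjoint K L) :
    Disjoint (exterior K)ᶜ (exterior L)ᶜ ∨ (exterior K)ᶜ ⊆ (L ∪ exterior L)ᶜ ∨
      (exterior L)ᶜ ⊆ (K ∪ exterior K)ᶜ := by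
  by_cases hKL : K ⊆ exterior L
  · by_cases hLK : L ⊆ exterior K
    · obtain ⟨q, hq⟩ := hKconn.nonempty
      refine .inl (disjoint_compl_right_iff_subset.2 (subset_exterior_of_inter_nonempty
        (isPreconnected_compl_exterior hK.isClosed hKconn)
        (disjoint_compl_left_iff_subset.2 hLK) ⟨q, ?_, hKL hq⟩))
      exact disjoint_left.1 (disjoint_exterior K) hq
    · exact .inr (.inr (compl_subset_compl.2
        (union_exterior_subset_exterior hE hK hKconn hLconn.isPreconnected hdisj hLK)))
  · exact .inr (.inl (compl_subset_compl.2
      (union_exterior_subset_exterior hE hL hLconn hKconn.isPreconnected hdisj.symm hKL)))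

end NormedSpace

section LogRatio

open Metric

/-- `(z - x) / (z - y)` has a continuous logarithm on `K`, the relation in Eilenberg's criterion
for `x` and `y` to lie in the same component of the complement of `K`. The equation is stated
without a quotient. -/
def HasLogRatioOn (K : Set ℂ) (x y : ℂ) : Prop :=
  ∃ g : ℂ → ℂ, ContinuousOn g K ∧ ∀ z ∈ K, (z - y) * Complex.exp (g z) = z - x

namespace HasLogRatioOn

variable {K L : Set ℂ} {x y w : ℂ}

lemma trans (hxy : HasLogRatioOn K x y) (hyw : HasLogRatioOn K y w) : HasLogRatioOn K x w := by
  obtain ⟨g, hg, hgexp⟩ := hxy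
  obtain ⟨k, hk, hkexp⟩ := hyw
  refine ⟨fun z => g z + k z, hg.add hk, fun z hz => ?_⟩
  rw [Complex.exp_add, ← hgexp z hz, ← hkexp z hz]
  ring

lemma symm (h : HasLogRatioOn K x y) : HasLogRatioOn K y x := by
  obtain ⟨g, hg, hgexp⟩ := h
  refine ⟨fun z => -g z, hg.neg, fun z hz => ?_⟩
  rw [← hgexp z hz, mul_assoc, ← Complex.exp_add, add_neg_cancel, Complex.exp_zero, mul_one]

lemma mono (h : HasLogRatioOn L x y) (hKL : K ⊆ L) : HasLogRatioOn K x y := by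
  obtain ⟨g, hg, hgexp⟩ := h
  exact ⟨g, hg.mono hKL, fun z hz => hgexp z (hKL hz)⟩

lemma union_of_disjoint (hKcl : IsClosed K) (hLcl : IsClosed L) (hdisj : Disjoint K L)
    (hK : HasLogRatioOn K x y) (hL : HasLogRatioOn L x y) : HasLogRatioOn (K ∪ L) x y := by
  classical
  obtain ⟨g, hg, hgexp⟩ := hK
  obtain ⟨k, hk, hkexp⟩ := hL
  have hKg : EqOn (K.piecewise g k) g K := piecewise_eqOn K g k
  have hLk : EqOn (K.piecewise g k) k L :=
    (piecewise_eqOn_compl K g k).mono hdisj.subset_compl_left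
  refine ⟨K.piecewise g k, (hg.congr hKg).union_of_isClosed (hk.congr hLk) hKcl hLcl, ?_⟩
  rintro z (hz | hz)
  · rw [hKg hz, hgexp z hz]
  · rw [hLk hz, hkexp z hz]

lemma of_mem_ball {r : ℝ} (hball : ball w r ⊆ Kᶜ) (hx : x ∈ ball w r) : HasLogRatioOn K x w := by
  have hw : ∀ z ∈ K, z - w ≠ 0 := fun z hz hzw =>
    hball (mem_ball_self (pos_of_mem_ball hx)) (sub_eq_zero.1 hzw ▸ hz)
  have hslit : ∀ z ∈ K, (z - x) / (z - w) ∈ Complex.slitPlane := by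
    intro z hz
    have hfar : r ≤ ‖z - w‖ := by
      rw [← dist_eq_norm]
      exact not_lt.1 fun h => hball h hz
    have hnear : ‖w - x‖ < r := by rwa [← dist_eq_norm, dist_comm]
    have heq : (z - x) / (z - w) = 1 + (w - x) / (z - w) := by
      field_simp [hw z hz]
      ring
    rw [heq]
    apply Complex.mem_slitPlane_of_norm_lt_one
    rw [norm_div, div_lt_one (norm_pos_iff.2 (hw z hz))]
    exact hnear.trans_le hfar
  refine ⟨fun z => Complex.log ((z - x) / (z - w)),
    ((by fun_prop : ContinuousOn (fun z => z - x) K).div (by fun_prop) hw).clog hslit,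
    fun z hz => ?_⟩
  rw [Complex.exp_log (Complex.slitPlane_ne_zero (hslit z hz)), mul_div_cancel₀ _ (hw z hz)]

lemma of_isPreconnected_compl (hK : IsClosed K) (hconn : IsPreconnected Kᶜ) (hx : x ∉ K)
    (hy : y ∉ K) : HasLogRatioOn K x y := by
  refine hconn.induction₂ (HasLogRatioOn K) (fun w hw => ?_) (fun _ _ _ _ _ _ => trans)
    (fun _ _ _ _ => symm) hx hy
  obtain ⟨r, hr, hball⟩ := isOpen_iff.1 hK.isOpen_compl w hw
  filter_upwards [mem_nhdsWithin_of_mem_nhds (ball_mem_nhds w hr)] with v hv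
  exact (of_mem_ball hball hv).symm

/-- In the inductive step the new member either is contained in an old one, or is disjoint from
the old members that it does not contain. -/
lemma biUnion_of_laminar {ι : Type*} {K : ι → Set ℂ} {s : Set ι} (hs : s.Finite)
    (hcl : ∀ i, IsClosed (K i)) (hlam : ∀ i j, Disjoint (K i) (K j) ∨ K i ⊆ K j ∨ K j ⊆ K i)
    (h : ∀ i, HasLogRatioOn (K i) x y) : HasLogRatioOn (⋃ i ∈ s, K i) x y := by
  induction s, hs using Set.Finite.induction_on with
  | empty => exact ⟨0, by simp, by simp⟩
  | @insert a s _ hs ih =>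
    rw [biUnion_insert]
    by_cases hsub : ∃ j ∈ s, K a ⊆ K j
    · obtain ⟨j, hj, haj⟩ := hsub
      rwa [union_eq_right.2 (haj.trans (subset_biUnion_of_mem hj))]
    push Not at hsub
    let t := {i ∈ s | Disjoint (K a) (K i)}
    have hts : t ⊆ s := sep_subset _ _
    have hdisj : Disjoint (K a) (⋃ i ∈ t, K i) := disjoint_iUnion₂_right.2 fun _ hi => hi.2
    have hcover : K a ∪ ⋃ i ∈ s, K i ⊆ K a ∪ ⋃ i ∈ t, K i := by
      refine union_subset subset_union_left (iUnion₂_subset fun i hi => ?_)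
      rcases hlam a i with hai | hai | hai
      · exact (subset_biUnion_of_mem (u := K) (show i ∈ t from ⟨hi, hai⟩)).trans subset_union_right
      · exact absurd hai (hsub i hi)
      · exact hai.trans subset_union_left
    exact (union_of_disjoint (hcl a) ((hs.subset hts).isClosed_biUnion fun i _ => hcl i) hdisj
      (h a) (ih.mono (biUnion_mono hts fun _ _ => Subset.rfl))).mono hcover

end HasLogRatioOn

lemma not_periodic_of_exp_eq_circleMap {g : ℝ → ℂ} (hg : Continuous g) {r : ℝ}
    (hexp : ∀ t, Complex.exp (g t) = circleMap 0 r t) : ¬ Function.Periodic g (2 * Real.pi) := by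
  intro hper
  have hdiff : ∀ t : ℝ, Complex.exp (g t - t * Complex.I) = r := fun t => by
    rw [Complex.exp_sub, hexp, circleMap_zero, mul_div_cancel_right₀ _ (Complex.exp_ne_zero _)]
  have hconst := Complex.isCoveringMap_exp.eq_of_comp_eq
    (g₁ := fun t : ℝ => g t - t * Complex.I) (by fun_prop) (continuous_const (y := g 0))
    (by ext t; simp [hdiff, hexp, circleMap_zero]) 0 (by simp)
  have := congrFun hconst (2 * Real.pi)
  simp [hper.eq, Real.pi_ne_zero] at this

lemma exists_eq_zero_of_eventually_eq_sub {F : ℂ → ℂ} (hF : Continuous F) {x : ℂ}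
    (hFx : ∀ᶠ z in cobounded ℂ, F z = z - x) : ∃ z, F z = 0 := by
  by_contra! hne
  obtain ⟨G, ⟨-, hG⟩, -⟩ := Complex.isCoveringMap_exp.existsUnique_continuousMap_lifts
    (⟨fun z => ⟨F z, hne z⟩, by fun_prop⟩ : C(ℂ, {z : ℂ // z ≠ 0})) 0 (Complex.log (F 0))
    (by simp [Complex.exp_log (hne 0)])
  have hGexp : ∀ z, Complex.exp (G z) = F z := fun z => by
    simpa using congrArg Subtype.val (congrFun hG z)
  obtain ⟨R, -, hR⟩ := (hasBasis_cobounded_compl_closedBall x).eventually_iff.1 hFx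
  refine not_periodic_of_exp_eq_circleMap (g := fun t => G (circleMap x (|R| + 1) t))
    (r := |R| + 1) (G.continuous.comp (continuous_circleMap _ _)) (fun t => ?_)
    fun t => by simp only [periodic_circleMap x (|R| + 1) t]
  have hfar : circleMap x (|R| + 1) t ∈ (closedBall x R)ᶜ := by
    have habs : 0 < |R| + 1 := by positivity
    rw [mem_compl_iff, mem_closedBall, dist_eq_norm, circleMap_sub_center, norm_circleMap_zero,
      abs_of_pos habs]
    linarith [le_abs_self R]
  rw [← circleMap_sub_center, ← hR hfar]
  exact hGexp _

/-- Otherwise a logarithm on `K`, extended by Tietze, would make `z - x` extend from outside the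
bounded component of `x` to a zero-free continuous function on the plane. -/
lemma mem_connectedComponentIn_of_hasLogRatioOn {K : Set ℂ} (hK : IsClosed K) {x y : ℂ}
    (hx : x ∉ K) (hb : IsBounded (connectedComponentIn Kᶜ x)) (h : HasLogRatioOn K x y) :
    y ∈ connectedComponentIn Kᶜ x := by
  classical
  obtain ⟨g, hg, hgexp⟩ := h
  obtain ⟨G, hG⟩ := ContinuousMap.exists_restrict_eq hK
    ⟨K.domRestrict g, continuousOn_iff_continuous_domRestrict.1 hg⟩
  have hGg : ∀ z ∈ K, G z = g z := fun z hz => DFunLike.congr_fun hG ⟨z, hz⟩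
  set U := connectedComponentIn Kᶜ x
  let F : ℂ → ℂ := U.piecewise (fun z => (z - y) * Complex.exp (G z)) (fun z => z - x)
  have hF : Continuous F := by
    refine Continuous.piecewise (fun z hz => ?_) (by fun_prop) (by fun_prop)
    have hzK := frontier_connectedComponentIn_compl_subset hK x hz
    rw [hGg z hzK, hgexp z hzK]
  have hFout : ∀ z ∉ U, F z = z - x := fun z => piecewise_eq_of_notMem _ _ _
  obtain ⟨z, hz⟩ := exists_eq_zero_of_eventually_eq_sub hF
    (Filter.mem_of_superset (isBounded_def.1 hb) hFout)
  by_cases hzU : z ∈ U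
  · have hzy : z - y = 0 := by simpa [F, hzU] using hz
    rwa [← sub_eq_zero.1 hzy]
  · rw [hFout z hzU, sub_eq_zero] at hz
    exact absurd (hz ▸ mem_connectedComponentIn hx) hzU

lemma one_lt_rank_real_complex : 1 < Module.rank ℝ ℂ := by
  rw [Complex.rank_real_complex]
  exact Cardinal.one_lt_two

theorem isPreconnected_compl_iff_hasLogRatioOn {K : Set ℂ} (hK : IsCompact K) :
    IsPreconnected Kᶜ ↔ ∀ x ∉ K, ∀ y ∉ K, HasLogRatioOn K x y := by
  refine ⟨fun h x hx y hy => .of_isPreconnected_compl hK.isClosed h hx hy, fun h =>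
    isPreconnected_of_forall_pair fun x hx y hy => ?_⟩
  by_cases hbx : IsBounded (connectedComponentIn Kᶜ x)
  · exact ⟨_, connectedComponentIn_subset _ _, mem_connectedComponentIn hx,
      mem_connectedComponentIn_of_hasLogRatioOn hK.isClosed hx hbx (h x hx y hy),
      isPreconnected_connectedComponentIn⟩
  by_cases hby : IsBounded (connectedComponentIn Kᶜ y)
  · exact ⟨_, connectedComponentIn_subset _ _,
      mem_connectedComponentIn_of_hasLogRatioOn hK.isClosed hy hby (h y hy x hx),
      mem_connectedComponentIn hy, isPreconnected_connectedComponentIn⟩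
  exact ⟨exterior K, fun _ hz => hz.1, ⟨hx, hbx⟩, ⟨hy, hby⟩,
    isPreconnected_exterior one_lt_rank_real_complex hK.isBounded⟩

theorem isPreconnected_compl_iUnion_of_laminar {X ι : Type*} [TopologicalSpace X] [Finite ι]
    (e : X ≃ₜ ℂ) {K : ι → Set X} (hK : ∀ i, IsCompact (K i))
    (hlam : ∀ i j, Disjoint (K i) (K j) ∨ K i ⊆ K j ∨ K j ⊆ K i)
    (hconn : ∀ i, IsPreconnected (K i)ᶜ) : IsPreconnected (⋃ i, K i)ᶜ := by
  have hcomp : ∀ i, IsCompact (e '' K i) := fun i => (hK i).image e.continuous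
  rw [← e.isPreconnected_image, e.image_compl, image_iUnion,
    isPreconnected_compl_iff_hasLogRatioOn (isCompact_iUnion hcomp)]
  intro x hx y hy
  rw [mem_iUnion, not_exists] at hx hy
  rw [← biUnion_univ]
  refine .biUnion_of_laminar finite_univ (fun i => (hcomp i).isClosed) (fun i j => ?_) fun i => ?_
  · simpa only [disjoint_image_iff e.injective, image_subset_image_iff e.injective]
      using hlam i j
  · refine (isPreconnected_compl_iff_hasLogRatioOn (hcomp i)).1 ?_ x (hx i) y (hy i)
    rw [← e.image_compl]
    exact e.isPreconnected_image.2 (hconn i)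

end LogRatio

section Jordan

open Metric

lemma one_lt_rank_real_euclideanPlane : 1 < Module.rank ℝ (EuclideanSpace ℝ (Fin 2)) := by
  rw [← Module.finrank_eq_rank]
  simp

namespace IsJordanCurve

variable {J : Set (EuclideanSpace ℝ (Fin 2))}

lemma isCompact (hJ : IsJordanCurve J) : IsCompact J := by
  obtain ⟨f, hf, -, rfl⟩ := hJ
  exact isCompact_range hf

lemma isConnected (hJ : IsJordanCurve J) : IsConnected J := by
  obtain ⟨f, hf, -, rfl⟩ := hJ
  have : ConnectedSpace (sphere (0 : EuclideanSpace ℝ (Fin 2)) 1) :=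
    isConnected_iff_connectedSpace.1
      (isConnected_sphere one_lt_rank_real_euclideanPlane 0 zero_le_one)
  exact isConnected_range hf

end IsJordanCurve

lemma exists_continuousOn_injOn_compl_singleton_sphere {E : Type*} [NormedAddCommGroup E]
    [InnerProductSpace ℝ E] (hE : Module.finrank ℝ E = 2) (v : sphere (0 : E) 1) :
    ∃ φ : sphere (0 : E) 1 → ℝ, ContinuousOn φ {v}ᶜ ∧ InjOn φ {v}ᶜ := by
  have : Fact (Module.finrank ℝ E = 1 + 1) := ⟨hE⟩
  have hcoord : Function.Injective fun p : EuclideanSpace ℝ (Fin 1) => p 0 := fun p q h => by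
    ext i
    rwa [Subsingleton.elim i 0]
  rw [← stereographic'_source (n := 1) v]
  exact ⟨fun z => stereographic' 1 v z 0,
    (by fun_prop : Continuous fun p : EuclideanSpace ℝ (Fin 1) => p 0).comp_continuousOn
      (stereographic' 1 v).continuousOn, hcoord.comp_injOn (stereographic' 1 v).injOn⟩

/-- A disc inside the curve, punctured at its centre, would embed in the line, although it stays
connected when any further point is removed. -/
lemma IsJordanCurve.interior_eq_empty {J : Set (EuclideanSpace ℝ (Fin 2))}
    (hJ : IsJordanCurve J) : interior J = ∅ := by
  obtain ⟨f, hf, hinj, rfl⟩ := hJ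
  have hemb : IsEmbedding f := (hf.isClosedEmbedding hinj).isEmbedding
  rw [← not_nonempty_iff_eq_empty]
  rintro ⟨p, hp⟩
  obtain ⟨r, hr, hball⟩ := isOpen_iff.1 isOpen_interior p hp
  replace hball := hball.trans interior_subset
  obtain ⟨v, rfl⟩ := interior_subset hp
  obtain ⟨φ, hφ, hφinj⟩ := exists_continuousOn_injOn_compl_singleton_sphere (by simp) v
  have himage : ∀ s, f '' (f ⁻¹' (ball (f v) r \ s)) = ball (f v) r \ s := fun s =>
    image_preimage_eq_of_subset (sdiff_subset.trans hball)
  have hconn : ∀ s : Set _, s.Finite → IsPreconnected (f ⁻¹' (ball (f v) r \ s)) := by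
    intro s hs
    rw [← hemb.isInducing.isPreconnected_image, himage]
    exact isPreconnected_ball_diff_of_countable one_lt_rank_real_euclideanPlane _ _ hs.countable
  have hnt : (f ⁻¹' (ball (f v) r \ {f v})).Nontrivial := by
    apply nontrivial_of_image f
    rw [himage]
    exact ((infinite_of_mem_nhds (f v) (ball_mem_nhds _ hr)).sdiff (finite_singleton _)).nontrivial
  have hsub : f ⁻¹' (ball (f v) r \ {f v}) ⊆ {v}ᶜ := fun z hz hzv => hz.2 (congrArg f hzv)
  refine not_injOn_of_isPreconnected_diff_singleton hnt (hconn _ (finite_singleton _))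
    (fun c _ => ?_) (hφ.mono hsub) (hφinj.mono hsub)
  rw [← preimage_image_eq {c} hinj, image_singleton, ← preimage_sdiff, Set.sdiff_sdiff]
  exact hconn _ ((finite_singleton _).union (finite_singleton _))

variable {J L : Set (EuclideanSpace ℝ (Fin 2))}

lemma jordanInterior_eq_compl (J : Set (EuclideanSpace ℝ (Fin 2))) :
    jordanInterior J = (J ∪ exterior J)ᶜ := by
  ext x
  simp only [jordanInterior, exterior, mem_ofPred_eq, mem_compl_iff, mem_union]
  tauto

lemma closure_jordanInterior_subset (hJ : IsClosed J) :
    closure (jordanInterior J) ⊆ (exterior J)ᶜ := by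
  refine closure_minimal ?_ (isOpen_exterior hJ).isClosed_compl
  rw [jordanInterior_eq_compl]
  exact compl_subset_compl.2 subset_union_right

lemma isCompact_closure_jordanInterior (hJ : IsCompact J) :
    IsCompact (closure (jordanInterior J)) :=
  isCompact_of_isClosed_isBounded isClosed_closure
    ((isBounded_compl_exterior one_lt_rank_real_euclideanPlane hJ.isBounded).subset
      (closure_jordanInterior_subset hJ.isClosed))

lemma isPreconnected_compl_closure_jordanInterior (hJ : IsCompact J) (hint : interior J = ∅) :
    IsPreconnected (closure (jordanInterior J))ᶜ := by
  refine (isPreconnected_exterior one_lt_rank_real_euclideanPlane hJ.isBounded).subset_closure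
    (subset_compl_comm.1 (closure_jordanInterior_subset hJ.isClosed)) ?_
  calc (closure (jordanInterior J))ᶜ = interior (exterior J ∪ J) := by
        rw [jordanInterior_eq_compl, closure_compl, compl_compl, union_comm]
    _ ⊆ interior (closure (exterior J) ∪ J) :=
        interior_mono (union_subset_union_left _ subset_closure)
    _ = interior (closure (exterior J)) :=
        interior_union_isClosed_of_interior_empty isClosed_closure hint
    _ ⊆ closure (exterior J) := interior_subset

lemma closure_jordanInterior_disjoint_or_nested (hJ : IsCompact J) (hL : IsCompact L)
    (hJconn : IsConnected J) (hLconn : IsConnected L) (hdisj : Disjoint J L) :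
    Disjoint (closure (jordanInterior J)) (closure (jordanInterior L)) ∨
      closure (jordanInterior J) ⊆ closure (jordanInterior L) ∨
      closure (jordanInterior L) ⊆ closure (jordanInterior J) := by
  have hJsub := closure_jordanInterior_subset hJ.isClosed
  have hLsub := closure_jordanInterior_subset hL.isClosed
  have h := compl_exterior_disjoint_or_nested one_lt_rank_real_euclideanPlane hJ hL hJconn hLconn
    hdisj
  simp only [← jordanInterior_eq_compl] at h
  rcases h with h | h | h
  · exact .inl (h.mono hJsub hLsub)
  · exact .inr (.inl (hJsub.trans (h.trans subset_closure)))
  · exact .inr (.inr (hLsub.trans (h.trans subset_closure)))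

end Jordan

theorem compl_iUnion_closures_pathConnected_general {ι : Type*} [Finite ι]
    (J : ι → Set (EuclideanSpace ℝ (Fin 2))) (hcomp : ∀ i, IsCompact (J i))
    (hconn : ∀ i, IsConnected (J i)) (hint : ∀ i, interior (J i) = ∅)
    (hdisj : Pairwise (Function.onFun Disjoint J)) :
    IsPathConnected ((⋃ i, closure (jordanInterior (J i)))ᶜ) := by
  have hK : ∀ i, IsCompact (closure (jordanInterior (J i))) := fun i =>
    isCompact_closure_jordanInterior (hcomp i)
  have hunion := isCompact_iUnion hK
  rw [← hunion.isClosed.isOpen_compl.isConnected_iff_isPathConnected]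
  refine ⟨nonempty_compl.2 hunion.ne_univ, isPreconnected_compl_iUnion_of_laminar
    Complex.orthonormalBasisOneI.repr.symm.toHomeomorph hK (fun i j => ?_) fun i =>
      isPreconnected_compl_closure_jordanInterior (hcomp i) (hint i)⟩
  obtain rfl | hij := eq_or_ne i j
  · exact .inr (.inl Subset.rfl)
  · exact closure_jordanInterior_disjoint_or_nested (hcomp i) (hcomp j) (hconn i) (hconn j)
      (hdisj hij)

/-- For any finite collection of pairwise disjoint Jordan curves `J 0, …, J (n-1)` in `ℝ²`,
the complement `ℝ² \ ⋃ i, closure (int (J i))` is path-connected. -/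
theorem compl_iUnion_closures_pathConnected
    (n : ℕ) (J : Fin n → Set (EuclideanSpace ℝ (Fin 2)))
    (hJ : ∀ i, IsJordanCurve (J i))
    (hdisj : Pairwise (Function.onFun Disjoint J)) :
    IsPathConnected ((⋃ i, closure (jordanInterior (J i)))ᶜ) :=
  compl_iUnion_closures_pathConnected_general J (fun i => (hJ i).isCompact)
    (fun i => (hJ i).isConnected) (fun i => (hJ i).interior_eq_empty) hdisj
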